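/- Let T be a triangulation of an unpunctured disc with N marked points, and let n_{ij} denote the number of matchings between T and all vertices except i and j. If i and j are joined by an arc of T, or if j = i+1 (neighbours on the boundary), then n_{ij} = 1. -/

import Mathlib

noncomputable section
open scoped Classical

namespace Frieze

/-- Vertices of the disc with `N` marked points, labelled clockwise. -/
abbrev Vx (N : ℕ) := ZMod N

/-- `Btw a x b` : `x` lies strictly between `a` and `b`, going clockwise. -/
def Btw {N : ℕ} (a x b : Vx N) : Prop :=
  0 < (x - a).val ∧ (x - a).val < (b - a).val

/-- A valid diagonal (arc) of the unpunctured disc: endpoints distinct and non-adjacent. -/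
def IsDiag (N : ℕ) (p : Vx N × Vx N) : Prop :=
  p.2 ≠ p.1 ∧ p.2 ≠ p.1 + 1 ∧ p.1 ≠ p.2 + 1

/-- Two chords cross iff their endpoints strictly interleave in the cyclic order. -/
def DCross {N : ℕ} (p q : Vx N × Vx N) : Prop :=
  (Btw p.1 q.1 p.2 ∧ Btw p.2 q.2 p.1) ∨ (Btw p.1 q.2 p.2 ∧ Btw p.2 q.1 p.1)

/-- A triangulation of the unpunctured disc with `N` marked points:
a maximal collection of pairwise noncrossing diagonals (each recorded once). -/
structure Triang (N : ℕ) where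
  diag : Finset (Vx N × Vx N)
  valid : ∀ p ∈ diag, IsDiag N p
  nodupSym : ∀ p ∈ diag, (p.2, p.1) ∉ diag
  noncross : ∀ p ∈ diag, ∀ q ∈ diag, ¬ DCross p q
  maximal : ∀ p, IsDiag N p → (∀ q ∈ diag, ¬ DCross p q) → p ∈ diag ∨ (p.2, p.1) ∈ diag

/-- The unordered diagonal `{a,b}` belongs to `T`. -/
def MemD {N : ℕ} (T : Triang N) (a b : Vx N) : Prop :=
  (a, b) ∈ T.diag ∨ (b, a) ∈ T.diag

/-- The segment from `a` to `a + d` (going `d` steps clockwise) can be a side of a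
triangle: it is a boundary edge (`d = 1`) or a diagonal of `T`. -/
def USide {N : ℕ} (T : Triang N) (a : Vx N) (d : ℕ) : Prop :=
  d = 1 ∨ MemD T a (a + (d : Vx N))

/-- `(a, p, q)` encodes the triangle with vertices `a`, `a+p`, `a+p+q` (clockwise);
the canonicity condition (`a` carries the smallest label) makes each triangle of
the triangulation be recorded exactly once. -/
def IsUTri {N : ℕ} (T : Triang N) (t : Vx N × ℕ × ℕ) : Prop :=
  1 ≤ t.2.1 ∧ 1 ≤ t.2.2 ∧ t.2.1 + t.2.2 ≤ N - 1 ∧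
  USide T t.1 t.2.1 ∧ USide T (t.1 + (t.2.1 : Vx N)) t.2.2 ∧
  USide T (t.1 + ((t.2.1 + t.2.2 : ℕ) : Vx N)) (N - t.2.1 - t.2.2) ∧
  t.1.val < (t.1 + (t.2.1 : Vx N)).val ∧ t.1.val < (t.1 + ((t.2.1 + t.2.2 : ℕ) : Vx N)).val

/-- Incidence of a vertex with a triangle. -/
def UInc {N : ℕ} (v : Vx N) (t : Vx N × ℕ × ℕ) : Prop :=
  v = t.1 ∨ v = t.1 + (t.2.1 : Vx N) ∨ v = t.1 + ((t.2.1 + t.2.2 : ℕ) : Vx N)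

/-- The number of matchings between the vertex set `I` and those triangles of `T`
lying in `S` : injective allocations, to each vertex of `I`, of an incident triangle. -/
def UMatchIn {N : ℕ} (T : Triang N) (I : Finset (Vx N)) (S : Set (Vx N × ℕ × ℕ)) : ℕ :=
  Set.ncard {f : I → Vx N × ℕ × ℕ | Function.Injective f ∧
    ∀ v : I, IsUTri T (f v) ∧ f v ∈ S ∧ UInc v.1 (f v)}

/-- The number of matchings between the vertex set `I` and the triangulation `T`. -/
def UMatch {N : ℕ} (T : Triang N) (I : Finset (Vx N)) : ℕ :=
  UMatchIn T I Set.univ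

/-- `n_{ij}` : the number of matchings between `T` and all marked points except `i, j`. -/
def nMatch {N : ℕ} [NeZero N] (T : Triang N) (i j : Vx N) : ℕ :=
  UMatch T (Finset.univ \ {i, j})

/-- `i` and `j` are joined by an edge of the triangulated polygon
(a boundary edge or a diagonal of `T`). -/
def Joined {N : ℕ} (T : Triang N) (i j : Vx N) : Prop :=
  j = i + 1 ∨ i = j + 1 ∨ MemD T i j

/-- `x` lies in the closed clockwise arc from `a` to `b`. -/
def InCWArc {N : ℕ} (a x b : Vx N) : Prop := x = a ∨ x = b ∨ Btw a x b

/-- `ℓ` is the Conway–Coxeter labelling of the vertices based at `i` : the vertex `i`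
is labelled `0`, every vertex joined to `i` by an edge (of `T`, or a boundary edge)
is labelled `1`, and in each triangle the vertex on the far side from `i` is labelled
by the sum of the labels of the other two vertices.  The label `ℓ j` is then the
Conway–Coxeter frieze entry `(i,j)`. -/
def IsCCLabel {N : ℕ} (T : Triang N) (i : Vx N) (ℓ : Vx N → ℕ) : Prop :=
  ℓ i = 0 ∧ (∀ j, Joined T i j → ℓ j = 1) ∧
  ∀ a p q, IsUTri T (a, p, q) →
    (InCWArc (a + ((p + q : ℕ) : Vx N)) i a →
      ℓ (a + (p : Vx N)) = ℓ a + ℓ (a + ((p + q : ℕ) : Vx N))) ∧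
    (InCWArc a i (a + (p : Vx N)) →
      ℓ (a + ((p + q : ℕ) : Vx N)) = ℓ a + ℓ (a + (p : Vx N))) ∧
    (InCWArc (a + (p : Vx N)) i (a + ((p + q : ℕ) : Vx N)) →
      ℓ a = ℓ (a + (p : Vx N)) + ℓ (a + ((p + q : ℕ) : Vx N)))

/-!
Every marked point `v` other than `i` and `j` is a corner of exactly one triangle in whose angle at
`v` the chord `ij` is seen. This chord is a side or a diagonal, hence crosses nothing in `T`, so it
lies behind exactly one side of each triangle and every triangle is obtained from exactly one `v`.
The resulting bijection `Δ` between the marked points other than `i`, `j` and the triangles is a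
matching. Looking through the triangle `Δ w` towards `ij`, the arc behind its far side shrinks when
`w` is replaced by another corner `v` of `Δ w`. Hence in a matching `v ↦ Δ (s v)` the arc at `s v`
is longer than the arc at `v` unless `s v = v`; as `s` permutes a finite set, `s` is the identity.
-/

/-- The number of clockwise steps from `a` to `b`, a number in `[0, N)` when `N ≠ 0`. It turns
statements about the cyclic order of the marked points into linear arithmetic. -/
def cwDist {N : ℕ} (a b : Vx N) : ℕ := (b - a).val

/-- `a`, `b`, `c` are, in clockwise order, the vertices of a triangle of `T`. Unlike in `IsUTri`,
none of the three vertices is singled out. -/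
structure IsTriangle {N : ℕ} (T : Triang N) (a b c : Vx N) : Prop where
  joined₁₂ : Joined T a b
  joined₂₃ : Joined T b c
  joined₃₁ : Joined T c a
  btw : Btw a b c

/-- `v x y` is the triangle at the vertex `v` that faces the chord `ij`: both `i` and `j` lie
behind its far side `xy`, seen from `v`. -/
structure Faces {N : ℕ} (T : Triang N) (i j v x y : Vx N) : Prop extends IsTriangle T v x y where
  inCWArc₁ : InCWArc x i y
  inCWArc₂ : InCWArc x j y

/-- The three corners of an encoded triangle. -/
def vertexSet {N : ℕ} (t : Vx N × ℕ × ℕ) : Set (Vx N) := {u | UInc u t}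

section UniqueMatching

variable {α β γ : Type*} [Finite α] [Preorder γ]

theorem eq_id_of_injective_of_lt_rank {f : α → α} (hf : Function.Injective f) (rank : α → γ)
    (h : ∀ a, a = f a ∨ rank a < rank (f a)) : f = id := by
  funext a
  by_contra hne
  have hlt : ∀ n, rank (f^[n] a) < rank (f^[n + 1] a) := fun n => by
    rw [Function.iterate_succ_apply']
    refine (h (f^[n] a)).resolve_left fun hfix => hne (hf.iterate n ?_)
    rw [← Function.iterate_succ_apply, Function.iterate_succ_apply', ← hfix, id]
  obtain ⟨n, hn, hper⟩ := hf.mem_periodicPts a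
  have : rank (f^[0] a) < rank (f^[n] a) := strictMono_nat_of_lt_succ hlt hn
  rw [hper.eq] at this
  exact lt_irrefl _ this

theorem injective_allocations_eq_singleton {allowed : α → β → Prop} {g : α → β} (rank : α → γ)
    (hg : ∀ a, allowed a (g a)) (hrank : ∀ a b, allowed a (g b) → a = b ∨ rank a < rank b)
    (hsurj : ∀ a t, allowed a t → t ∈ Set.range g) :
    {f : α → β | Function.Injective f ∧ ∀ a, allowed a (f a)} = {g} := by
  have hginj : Function.Injective g := fun a b hab =>
    (hrank a b (hab ▸ hg a)).resolve_right fun hlt =>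
      (hrank b a (hab ▸ hg b)).elim (fun hba => (hba ▸ hlt).false) hlt.asymm
  ext f
  simp only [Set.mem_ofPred_eq, Set.mem_singleton_iff]
  refine ⟨fun ⟨hfinj, hf⟩ => ?_, fun hfg => hfg ▸ ⟨hginj, hg⟩⟩
  choose s hs using fun a => hsurj a (f a) (hf a)
  have hsinj : Function.Injective s := fun a b hab => hfinj (by rw [← hs a, ← hs b, hab])
  have hsid : s = id :=
    eq_id_of_injective_of_lt_rank hsinj rank fun a => hrank a (s a) (by rw [hs]; exact hf a)
  funext a
  rw [← hs a, hsid, id]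

end UniqueMatching

section CyclicOrder

variable {N : ℕ} {a b c d x : Vx N}

theorem cwDist_self (a : Vx N) : cwDist a a = 0 := by simp [cwDist]

theorem cwDist_eq_zero_iff : cwDist a b = 0 ↔ b = a := by
  simp [cwDist, ZMod.val_eq_zero, sub_eq_zero]

theorem cwDist_pos_iff : 0 < cwDist a b ↔ a ≠ b := by
  rw [Nat.pos_iff_ne_zero, Ne, cwDist_eq_zero_iff, eq_comm]

theorem not_btw_add_one (a x : Vx N) : ¬ Btw a x (a + 1) := by
  rintro ⟨hpos, hlt⟩
  have h1 : (a + 1 - a).val ≤ 1 := by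
    rw [add_sub_cancel_left, ZMod.val_one_eq_one_mod]
    exact Nat.mod_le 1 N
  omega

theorem cwDist_add_natCast (a : Vx N) {k : ℕ} (hk : k < N) : cwDist a (a + (k : Vx N)) = k := by
  simp [cwDist, ZMod.val_natCast, Nat.mod_eq_of_lt hk]

theorem Btw.ne₁₂ (h : Btw a b c) : a ≠ b := cwDist_pos_iff.1 h.1

theorem Btw.ne₁₃ (h : Btw a b c) : a ≠ c := cwDist_pos_iff.1 (h.1.trans h.2)

theorem Btw.eq_of_triple_eq {b' c' : Vx N} (h : Btw a b c) (h' : Btw a b' c')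
    (heq : ({a, b, c} : Set (Vx N)) = {a, b', c'}) : b = b' ∧ c = c' := by
  have hlt : cwDist a b < cwDist a c := h.2
  have hlt' : cwDist a b' < cwDist a c' := h'.2
  have hb : b = a ∨ b = b' ∨ b = c' := heq.le (Or.inr (Or.inl rfl))
  have hc : c = a ∨ c = b' ∨ c = c' := heq.le (Or.inr (Or.inr rfl))
  rcases hb.resolve_left h.ne₁₂.symm with rfl | rfl <;>
    rcases hc.resolve_left h.ne₁₃.symm with rfl | rfl
  · exact absurd hlt (lt_irrefl _)
  · exact ⟨rfl, rfl⟩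
  · exact absurd hlt hlt'.asymm
  · exact absurd hlt (lt_irrefl _)

variable [NeZero N]

theorem cwDist_lt (a b : Vx N) : cwDist a b < N := ZMod.val_lt _

theorem cwDist_inj : cwDist a b = cwDist a c ↔ b = c := by
  rw [cwDist, cwDist, (ZMod.val_injective N).eq_iff, sub_left_inj]

theorem add_cwDist (a b : Vx N) : a + (cwDist a b : Vx N) = b := by simp [cwDist]

theorem cwDist_eq_one_iff (hN : 1 < N) : cwDist a b = 1 ↔ b = a + 1 := by
  have h1 : cwDist a (a + 1) = 1 := by simpa using cwDist_add_natCast a hN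
  rw [← h1, cwDist_inj]

theorem cwDist_add_cwDist (a b c : Vx N) :
    cwDist a b + cwDist b c = cwDist a c ∨ cwDist a b + cwDist b c = cwDist a c + N := by
  have hmod : cwDist a c = (cwDist a b + cwDist b c) % N := by
    rw [cwDist, cwDist, cwDist, ← ZMod.val_add]
    congr 1
    ring
  have hab := cwDist_lt a b
  have hbc := cwDist_lt b c
  rcases lt_or_ge (cwDist a b + cwDist b c) N with h | h
  · exact Or.inl (by rw [hmod, Nat.mod_eq_of_lt h])
  · rw [Nat.mod_eq_sub_mod h, Nat.mod_eq_of_lt (by omega)] at hmod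
    omega

theorem cwDist_add_cwDist_swap (h : a ≠ b) : cwDist a b + cwDist b a = N := by
  have hpos := cwDist_pos_iff.2 h
  have haba := cwDist_add_cwDist a b a
  rw [cwDist_self] at haba
  omega

theorem Btw.cwDist_add (h : Btw a b c) : cwDist a b + cwDist b c = cwDist a c := by
  have hlt : cwDist a b < cwDist a c := h.2
  have hbc := cwDist_lt b c
  have habc := cwDist_add_cwDist a b c
  omega

theorem Btw.rotate (h : Btw a b c) : Btw b c a := by
  have hlt : cwDist a b < cwDist a c := h.2
  have hadd := h.cwDist_add
  have hba := cwDist_add_cwDist_swap h.ne₁₂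
  have hac := cwDist_lt a c
  exact ⟨show 0 < cwDist b c by omega, show cwDist b c < cwDist b a by omega⟩

theorem Btw.btw_of_btw_swap (h : Btw a b c) (h' : Btw c d a) : Btw b c d := by
  have hlt : cwDist c d < cwDist c a := h'.2
  have hbc : 0 < cwDist b c := h.rotate.1
  have hcd : 0 < cwDist c d := h'.1
  have hba := h.rotate.cwDist_add
  have hba_lt := cwDist_lt b a
  have hbcd := cwDist_add_cwDist b c d
  exact ⟨hbc, show cwDist b c < cwDist b d by omega⟩

theorem inCWArc_iff : InCWArc a x b ↔ cwDist a x ≤ cwDist a b := by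
  rw [InCWArc, ← cwDist_eq_zero_iff, ← cwDist_inj (a := a) (b := x) (c := b)]
  change _ ∨ _ ∨ (0 < cwDist a x ∧ cwDist a x < cwDist a b) ↔ _
  omega

theorem not_inCWArc_iff (h : a ≠ b) : ¬ InCWArc a x b ↔ Btw b x a := by
  have hab := cwDist_add_cwDist_swap h
  have hbax := cwDist_add_cwDist a b x
  have hax := cwDist_lt a x
  have hbx := cwDist_lt b x
  rw [inCWArc_iff]
  change _ ↔ 0 < cwDist b x ∧ cwDist b x < cwDist b a
  omega

theorem Btw.inCWArc_iff (h : Btw a b c) :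
    InCWArc b x c ↔ cwDist a b ≤ cwDist a x ∧ cwDist a x ≤ cwDist a c := by
  have hadd := h.cwDist_add
  have habx := cwDist_add_cwDist a b x
  have hac := cwDist_lt a c
  have hbx := cwDist_lt b x
  rw [Frieze.inCWArc_iff]
  omega

theorem Btw.btw_iff (h : Btw a b c) :
    Btw b x c ↔ cwDist a b < cwDist a x ∧ cwDist a x < cwDist a c := by
  have hadd := h.cwDist_add
  have habx := cwDist_add_cwDist a b x
  have hac := cwDist_lt a c
  have hbx := cwDist_lt b x
  change 0 < cwDist b x ∧ cwDist b x < cwDist b c ↔ _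
  omega

theorem Btw.eq_or_btw (h : Btw a b c) (x : Vx N) :
    (x = a ∨ x = b ∨ x = c) ∨ Btw a x b ∨ Btw b x c ∨ Btw c x a := by
  have harcs : InCWArc a x b ∨ InCWArc b x c ∨ Btw c x a := by
    rw [← not_inCWArc_iff h.ne₁₃, h.inCWArc_iff, Frieze.inCWArc_iff, Frieze.inCWArc_iff]
    omega
  unfold InCWArc at harcs
  tauto

end CyclicOrder

section Noncrossing

variable {N : ℕ} {T : Triang N} {v x y z w : Vx N}

theorem MemD.symm (h : MemD T x y) : MemD T y x := Or.symm h

theorem MemD.ne (h : MemD T x y) : x ≠ y :=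
  h.elim (fun hxy => (T.valid _ hxy).1.symm) fun hyx => (T.valid _ hyx).1

theorem Joined.symm (h : Joined T x y) : Joined T y x :=
  or_left_comm.1 (h.imp_right (Or.imp_right MemD.symm))

theorem MemD.not_interleave (hxz : MemD T x z) (hyw : MemD T y w) (hy : Btw x y z) :
    ¬ Btw z w x := by
  intro hw
  rcases hxz with h | h <;> rcases hyw with h' | h'
  · exact T.noncross _ h _ h' (Or.inl ⟨hy, hw⟩)
  · exact T.noncross _ h _ h' (Or.inr ⟨hy, hw⟩)
  · exact T.noncross _ h _ h' (Or.inr ⟨hw, hy⟩)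
  · exact T.noncross _ h _ h' (Or.inl ⟨hw, hy⟩)

variable [NeZero N]

theorem Joined.inCWArc_of_btw (hxz : Joined T x z) (hyw : Joined T y w) (hy : Btw x y z) :
    InCWArc x w z := by
  by_contra hw
  rw [not_inCWArc_iff hy.ne₁₃] at hw
  rcases hxz with rfl | rfl | hxz
  · exact not_btw_add_one _ _ hy
  · exact not_btw_add_one _ _ hw
  rcases hyw with rfl | rfl | hyw
  · exact not_btw_add_one _ _ (hy.btw_of_btw_swap hw)
  · exact not_btw_add_one _ _ (hw.btw_of_btw_swap hy)
  exact hxz.not_interleave hyw hy hw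

theorem joined_of_forall_inCWArc (hxz : x ≠ z)
    (h : ∀ y w, Joined T y w → Btw x y z → InCWArc x w z) : Joined T x z := by
  by_cases hsucc : z = x + 1
  · exact Or.inl hsucc
  by_cases hpred : x = z + 1
  · exact Or.inr (Or.inl hpred)
  have not_interleave : ∀ y w, MemD T y w → Btw x y z → ¬ Btw z w x := fun y w hyw hy => by
    rw [← not_inCWArc_iff hxz, not_not]
    exact h y w (Or.inr (Or.inr hyw)) hy
  refine Or.inr (Or.inr (T.maximal (x, z) ⟨hxz.symm, hsucc, hpred⟩ fun q hq hcross => ?_))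
  rcases hcross with ⟨hy, hw⟩ | ⟨hy, hw⟩
  · exact not_interleave _ _ (Or.inl hq) hy hw
  · exact not_interleave _ _ (Or.inr hq) hy hw

theorem joined_of_consecutive (hvx : Joined T v x) (hvy : Joined T v y) (hxy : Btw v x y)
    (hnext : ∀ u, Joined T v u → ¬ Btw x u y) : Joined T x y := by
  refine joined_of_forall_inCWArc hxy.rotate.ne₁₂ fun u w huw hu => ?_
  obtain ⟨hxu, huy⟩ := hxy.btw_iff.1 hu
  rcases hxy.eq_or_btw w with (rfl | rfl | rfl) | hw | hw | hw
  · exact absurd hu (hnext u huw.symm)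
  · exact Or.inl rfl
  · exact Or.inr (Or.inl rfl)
  · exact absurd (inCWArc_iff.1 (hvx.inCWArc_of_btw huw.symm hw)) hxu.not_ge
  · exact Or.inr (Or.inr hw)
  · refine absurd (hvy.symm.inCWArc_of_btw huw.symm hw) ?_
    rw [not_inCWArc_iff hxy.ne₁₃.symm]
    exact ⟨hxy.1.trans hxu, huy⟩

end Noncrossing

section Triangles

variable {N : ℕ} [NeZero N] {T : Triang N} {i j a b c u v : Vx N}

theorem IsTriangle.rotate (h : IsTriangle T a b c) : IsTriangle T b c a :=
  ⟨h.joined₂₃, h.joined₃₁, h.joined₁₂, h.btw.rotate⟩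

theorem exists_isTriangle_of_btw (T : Triang N) (h : Btw v i j) :
    ∃ x y, IsTriangle T v x y ∧ cwDist v x ≤ cwDist v i ∧ cwDist v i < cwDist v y := by
  have hi : 0 < cwDist v i := h.1
  have hij : cwDist v i < cwDist v j := h.2
  have hj := cwDist_lt v j
  have hsucc : cwDist v (v + 1) = 1 := (cwDist_eq_one_iff (by omega)).2 rfl
  have hpred : cwDist v (v - 1) = N - 1 := by
    have hback : cwDist (v - 1) v = 1 := (cwDist_eq_one_iff (by omega)).2 (by ring)
    have hne : v - 1 ≠ v := cwDist_pos_iff.1 (by omega)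
    have := cwDist_add_cwDist_swap hne
    omega
  obtain ⟨x, ⟨hvx, hxi⟩, hxmax⟩ := Set.exists_max_image
    {u | Joined T v u ∧ cwDist v u ≤ cwDist v i} (cwDist v) (Set.toFinite _)
    ⟨v + 1, Or.inl rfl, by omega⟩
  obtain ⟨y, ⟨hvy, hiy⟩, hymin⟩ := Set.exists_min_image
    {u | Joined T v u ∧ cwDist v i < cwDist v u} (cwDist v) (Set.toFinite _)
    ⟨v - 1, Or.inr (Or.inl (by ring)), by omega⟩
  have hxpos : 0 < cwDist v x := by
    have := hxmax (v + 1) ⟨Or.inl rfl, by omega⟩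
    omega
  have hvxy : Btw v x y := ⟨hxpos, hxi.trans_lt hiy⟩
  refine ⟨x, y, ⟨hvx, joined_of_consecutive hvx hvy hvxy fun u hvu hu => ?_, hvy.symm, hvxy⟩,
    hxi, hiy⟩
  obtain ⟨hxu, huy⟩ := hvxy.btw_iff.1 hu
  rcases le_or_gt (cwDist v u) (cwDist v i) with hui | hiu
  · exact (hxmax u ⟨hvu, hui⟩).not_gt hxu
  · exact (hymin u ⟨hvu, hiu⟩).not_gt huy

theorem IsTriangle.cwDist_le_or_le (h : IsTriangle T a b c) (hau : Joined T a u) :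
    cwDist a u ≤ cwDist a b ∨ cwDist a c ≤ cwDist a u := by
  by_contra! hu
  have ha : InCWArc b a c := h.joined₂₃.inCWArc_of_btw hau.symm (h.btw.btw_iff.2 hu)
  exact (not_inCWArc_iff h.btw.rotate.ne₁₂).2 h.btw.rotate.rotate ha

theorem IsTriangle.faces_cases (h : IsTriangle T a b c) (hij : Joined T i j) :
    Faces T i j a b c ∨ Faces T i j b c a ∨ Faces T i j c a b := by
  have harc : (InCWArc b i c ∧ InCWArc b j c) ∨ (InCWArc c i a ∧ InCWArc c j a) ∨
      (InCWArc a i b ∧ InCWArc a j b) := by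
    rcases h.btw.eq_or_btw i with hi | hi | hi | hi
    · rcases h.btw.eq_or_btw j with hj | hj | hj | hj
      · unfold InCWArc; tauto
      · exact Or.inr (Or.inr ⟨h.joined₁₂.inCWArc_of_btw hij.symm hj, Or.inr (Or.inr hj)⟩)
      · exact Or.inl ⟨h.joined₂₃.inCWArc_of_btw hij.symm hj, Or.inr (Or.inr hj)⟩
      · exact Or.inr (Or.inl ⟨h.joined₃₁.inCWArc_of_btw hij.symm hj, Or.inr (Or.inr hj)⟩)
    · exact Or.inr (Or.inr ⟨Or.inr (Or.inr hi), h.joined₁₂.inCWArc_of_btw hij hi⟩)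
    · exact Or.inl ⟨Or.inr (Or.inr hi), h.joined₂₃.inCWArc_of_btw hij hi⟩
    · exact Or.inr (Or.inl ⟨Or.inr (Or.inr hi), h.joined₃₁.inCWArc_of_btw hij hi⟩)
  exact harc.imp (fun hbc => ⟨h, hbc.1, hbc.2⟩) (Or.imp
    (fun hca => ⟨h.rotate, hca.1, hca.2⟩) fun hab => ⟨h.rotate.rotate, hab.1, hab.2⟩)

end Triangles

section Faces

variable {N : ℕ} {T : Triang N} {i j u v x y x' y' : Vx N}

theorem Faces.swap (h : Faces T i j v x y) : Faces T j i v x y :=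
  ⟨h.toIsTriangle, h.inCWArc₂, h.inCWArc₁⟩

variable [NeZero N]

theorem Faces.cwDist_bounds (h : Faces T i j v x y) :
    (cwDist v x ≤ cwDist v i ∧ cwDist v i ≤ cwDist v y) ∧
      cwDist v x ≤ cwDist v j ∧ cwDist v j ≤ cwDist v y :=
  ⟨h.btw.inCWArc_iff.1 h.inCWArc₁, h.btw.inCWArc_iff.1 h.inCWArc₂⟩

theorem Faces.ne₁ (h : Faces T i j v x y) : v ≠ i :=
  cwDist_pos_iff.1 (lt_of_lt_of_le h.btw.1 h.cwDist_bounds.1.1)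

theorem exists_faces (hij : Joined T i j) (hne : i ≠ j) (hvi : v ≠ i) (hvj : v ≠ j) :
    ∃ x y, Faces T i j v x y := by
  wlog hlt : cwDist v i < cwDist v j generalizing i j
  · have hneq : cwDist v i ≠ cwDist v j := cwDist_inj.not.2 hne
    obtain ⟨x, y, h⟩ := this hij.symm hne.symm hvj hvi (by omega)
    exact ⟨x, y, h.swap⟩
  obtain ⟨x, y, hxy, hxi, hiy⟩ := exists_isTriangle_of_btw T ⟨cwDist_pos_iff.2 hvi, hlt⟩
  have hjy : cwDist v j ≤ cwDist v y :=
    inCWArc_iff.1 (hxy.joined₃₁.symm.inCWArc_of_btw hij ⟨cwDist_pos_iff.2 hvi, hiy⟩)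
  exact ⟨x, y, hxy, hxy.btw.inCWArc_iff.2 ⟨hxi, hiy.le⟩,
    hxy.btw.inCWArc_iff.2 ⟨hxi.trans hlt.le, hjy⟩⟩

theorem Faces.ne₂ (h : Faces T i j v x y) : v ≠ j := h.swap.ne₁

theorem Faces.cwDist_le_left (hij : i ≠ j) (h : Faces T i j v x y) (hvu : Joined T v u)
    (hui : cwDist v u ≤ cwDist v i) (huj : cwDist v u ≤ cwDist v j) :
    cwDist v u ≤ cwDist v x := by
  have hneq : cwDist v i ≠ cwDist v j := cwDist_inj.not.2 hij
  have hbounds := h.cwDist_bounds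
  have hu := h.cwDist_le_or_le hvu
  omega

theorem Faces.cwDist_right_le (hij : i ≠ j) (h : Faces T i j v x y) (hvu : Joined T v u)
    (hiu : cwDist v i ≤ cwDist v u) (hju : cwDist v j ≤ cwDist v u) :
    cwDist v y ≤ cwDist v u := by
  have hneq : cwDist v i ≠ cwDist v j := cwDist_inj.not.2 hij
  have hbounds := h.cwDist_bounds
  have hu := h.cwDist_le_or_le hvu
  omega

theorem Faces.unique (hij : i ≠ j) (h : Faces T i j v x y) (h' : Faces T i j v x' y') :
    x = x' ∧ y = y' := by
  obtain ⟨⟨hxi, hiy⟩, hxj, hjy⟩ := h.cwDist_bounds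
  obtain ⟨⟨hxi', hiy'⟩, hxj', hjy'⟩ := h'.cwDist_bounds
  exact ⟨cwDist_inj.1 (le_antisymm (h'.cwDist_le_left hij h.joined₁₂ hxi hxj)
      (h.cwDist_le_left hij h'.joined₁₂ hxi' hxj')),
    cwDist_inj.1 (le_antisymm (h.cwDist_right_le hij h'.joined₃₁.symm hiy' hjy')
      (h'.cwDist_right_le hij h.joined₃₁.symm hiy hjy))⟩

theorem Faces.farSide_lt_of_left (hij : i ≠ j) (h : Faces T i j v x y)
    (h' : Faces T i j x x' y') : cwDist x' y' < cwDist x y := by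
  have hy : cwDist x y' ≤ cwDist x y := h'.cwDist_right_le hij h.joined₂₃
    (inCWArc_iff.1 h.inCWArc₁) (inCWArc_iff.1 h.inCWArc₂)
  have hpos : 0 < cwDist x x' := h'.btw.1
  have hadd := h'.btw.cwDist_add
  omega

theorem Faces.farSide_lt_of_right (hij : i ≠ j) (h : Faces T i j v x y)
    (h' : Faces T i j y x' y') : cwDist x' y' < cwDist x y := by
  have hxy := h.btw.rotate.ne₁₂
  have hyx : ∀ k, InCWArc x k y → y ≠ k → cwDist y x ≤ cwDist y k := fun k hk hne => by
    by_contra! hlt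
    exact (not_inCWArc_iff hxy).2 ⟨cwDist_pos_iff.2 hne, hlt⟩ hk
  have hx : cwDist y x ≤ cwDist y x' := h'.cwDist_le_left hij h.joined₂₃.symm
    (hyx i h.inCWArc₁ h'.ne₁) (hyx j h.inCWArc₂ h'.ne₂)
  have hadd := h'.btw.cwDist_add
  have hlt := cwDist_lt y y'
  have hswap := cwDist_add_cwDist_swap hxy
  omega

end Faces

section Encoding

variable {N : ℕ} {T : Triang N} {a b c : Vx N} {t t' : Vx N × ℕ × ℕ}

theorem triple_rotate {α : Type*} (a b c : α) : ({b, c, a} : Set α) = {a, b, c} := by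
  rw [Set.pair_comm, Set.insert_comm]

theorem IsUTri.val_le (h : IsUTri T t) {u : Vx N} (hu : u ∈ vertexSet t) :
    t.1.val ≤ u.val := by
  obtain ⟨-, -, -, -, -, -, hlt₂, hlt₃⟩ := h
  rcases hu with rfl | rfl | rfl
  exacts [le_rfl, hlt₂.le, hlt₃.le]

variable [NeZero N]

theorem vertexSet_of_btw (h : Btw a b c) :
    vertexSet (a, cwDist a b, cwDist b c) = {a, b, c} := by
  ext u
  change u = a ∨ u = a + (cwDist a b : Vx N) ∨ u = a + ((cwDist a b + cwDist b c : ℕ) : Vx N) ↔ _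
  rw [h.cwDist_add, add_cwDist, add_cwDist]
  rfl

theorem Btw.uSide_iff (h : Btw a b c) : USide T a (cwDist a b) ↔ Joined T a b := by
  have hpos : 0 < cwDist a b := h.1
  have hlt : cwDist a b < cwDist a c := h.2
  have hac := cwDist_lt a c
  have hpred : a ≠ b + 1 := by
    rintro rfl
    exact not_btw_add_one _ _ h.rotate
  rw [USide, add_cwDist, cwDist_eq_one_iff (by omega), Joined, or_iff_right hpred]

theorem isUTri_iff (h : Btw a b c) : IsUTri T (a, cwDist a b, cwDist b c) ↔
    IsTriangle T a b c ∧ a.val < b.val ∧ a.val < c.val := by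
  have hab : 0 < cwDist a b := h.1
  have hbc : 0 < cwDist b c := h.rotate.1
  have hadd := h.cwDist_add
  have hac := cwDist_lt a c
  have hthird : N - cwDist a b - cwDist b c = cwDist c a := by
    have hswap := cwDist_add_cwDist_swap h.ne₁₃
    omega
  simp only [IsUTri, hthird, hadd, add_cwDist, h.uSide_iff, h.rotate.uSide_iff,
    h.rotate.rotate.uSide_iff]
  exact ⟨fun ⟨_, _, _, h₁₂, h₂₃, h₃₁, hval⟩ => ⟨⟨h₁₂, h₂₃, h₃₁, h⟩, hval⟩,
    fun ⟨⟨h₁₂, h₂₃, h₃₁, _⟩, hval⟩ => ⟨hab, hbc, by omega, h₁₂, h₂₃, h₃₁, hval⟩⟩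

theorem IsUTri.exists_isTriangle (h : IsUTri T t) :
    ∃ a b c, IsTriangle T a b c ∧ t = (a, cwDist a b, cwDist b c) := by
  obtain ⟨a, p, q⟩ := t
  have hp : 1 ≤ p := h.1
  have hq : 1 ≤ q := h.2.1
  have hpq : p + q ≤ N - 1 := h.2.2.1
  obtain ⟨b, hb⟩ : ∃ b, b = a + (p : Vx N) := ⟨_, rfl⟩
  obtain ⟨c, hc⟩ : ∃ c, c = a + ((p + q : ℕ) : Vx N) := ⟨_, rfl⟩
  have hab : cwDist a b = p := by rw [hb, cwDist_add_natCast a (by omega)]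
  have hac : cwDist a c = p + q := by rw [hc, cwDist_add_natCast a (by omega)]
  have hbtw : Btw a b c := ⟨show 0 < cwDist a b by omega, show cwDist a b < cwDist a c by omega⟩
  have hbc : cwDist b c = q := by
    have hadd := hbtw.cwDist_add
    omega
  rw [← hab, ← hbc] at h ⊢
  exact ⟨a, b, c, ((isUTri_iff hbtw).1 h).1, rfl⟩

theorem IsTriangle.exists_isUTri (h : IsTriangle T a b c) :
    ∃ t, IsUTri T t ∧ vertexSet t = {a, b, c} := by
  have of_min : ∀ {a b c : Vx N}, IsTriangle T a b c → a.val < b.val ∧ a.val < c.val →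
      ∃ t, IsUTri T t ∧ vertexSet t = {a, b, c} := fun habc hmin =>
    ⟨_, (isUTri_iff habc.btw).2 ⟨habc, hmin⟩, vertexSet_of_btw habc.btw⟩
  have hval := ZMod.val_injective N
  have hab : a.val ≠ b.val := hval.ne h.btw.ne₁₂
  have hbc : b.val ≠ c.val := hval.ne h.btw.rotate.ne₁₂
  have hac : a.val ≠ c.val := hval.ne h.btw.ne₁₃
  have hmin : (a.val < b.val ∧ a.val < c.val) ∨ (b.val < c.val ∧ b.val < a.val) ∨
      (c.val < a.val ∧ c.val < b.val) := by omega
  rcases hmin with ha | hb | hc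
  · exact of_min h ha
  · rw [← triple_rotate]
    exact of_min h.rotate hb
  · rw [← triple_rotate, ← triple_rotate]
    exact of_min h.rotate.rotate hc

theorem IsUTri.eq_of_vertexSet_eq (h : IsUTri T t) (h' : IsUTri T t')
    (heq : vertexSet t = vertexSet t') : t = t' := by
  have hfst : t.1 = t'.1 := ZMod.val_injective N <| le_antisymm
    (h.val_le (heq ▸ Or.inl rfl)) (h'.val_le (heq ▸ Or.inl rfl))
  obtain ⟨a, b, c, habc, rfl⟩ := h.exists_isTriangle
  obtain ⟨a', b', c', habc', rfl⟩ := h'.exists_isTriangle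
  obtain rfl : a = a' := hfst
  rw [vertexSet_of_btw habc.btw, vertexSet_of_btw habc'.btw] at heq
  obtain ⟨rfl, rfl⟩ := habc.btw.eq_of_triple_eq habc'.btw heq
  rfl

end Encoding

section Matching

variable {N : ℕ} [NeZero N] {T : Triang N} {i j : Vx N}

theorem exists_isUTri_faces (hij : Joined T i j) (hne : i ≠ j) {v : Vx N} (hvi : v ≠ i)
    (hvj : v ≠ j) : ∃ t x y, IsUTri T t ∧ Faces T i j v x y ∧ vertexSet t = {v, x, y} := by
  obtain ⟨x, y, hfaces⟩ := exists_faces hij hne hvi hvj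
  obtain ⟨t, ht, hset⟩ := hfaces.exists_isUTri
  exact ⟨t, x, y, ht, hfaces, hset⟩

theorem IsUTri.exists_faces {t : Vx N × ℕ × ℕ} (ht : IsUTri T t) (hij : Joined T i j) :
    ∃ v x y, Faces T i j v x y ∧ vertexSet t = {v, x, y} := by
  obtain ⟨a, b, c, habc, rfl⟩ := ht.exists_isTriangle
  have hset := vertexSet_of_btw habc.btw
  rcases habc.faces_cases hij with h | h | h
  · exact ⟨a, b, c, h, hset⟩
  · exact ⟨b, c, a, h, hset.trans (triple_rotate a b c).symm⟩
  · exact ⟨c, a, b, h, hset.trans (triple_rotate c a b)⟩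

theorem nMatch_eq_one_of_joined (hij : Joined T i j) (hne : i ≠ j) : nMatch T i j = 1 := by
  have hfacing : ∀ v : (Finset.univ \ {i, j} : Finset (Vx N)), ∃ t x y,
      IsUTri T t ∧ Faces T i j v x y ∧ vertexSet t = {v.1, x, y} := fun ⟨v, hv⟩ => by
    simp only [Finset.mem_sdiff, Finset.mem_univ, true_and, Finset.mem_insert,
      Finset.mem_singleton, not_or] at hv
    exact exists_isUTri_faces hij hne hv.1 hv.2
  choose g x y hg hfaces hset using hfacing
  have hrank : ∀ v w, UInc v.1 (g w) → v = w ∨ cwDist (x v) (y v) < cwDist (x w) (y w) := by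
    intro v w hvw
    have hv := hfaces v
    rcases (hset w).le hvw with heq | heq | heq
    · exact Or.inl (Subtype.ext heq)
    · rw [heq] at hv
      exact Or.inr ((hfaces w).farSide_lt_of_left hne hv)
    · rw [Set.mem_singleton_iff.1 heq] at hv
      exact Or.inr ((hfaces w).farSide_lt_of_right hne hv)
  have hsurj : ∀ t, IsUTri T t → t ∈ Set.range g := by
    intro t ht
    obtain ⟨v, x', y', hface, hset'⟩ := ht.exists_faces hij
    let v' : (Finset.univ \ {i, j} : Finset (Vx N)) := ⟨v, by simp [hface.ne₁, hface.ne₂]⟩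
    obtain ⟨hx, hy⟩ := (hfaces v').unique hne hface
    refine ⟨v', (hg v').eq_of_vertexSet_eq ht ?_⟩
    rw [hset, hset', hx, hy]
  exact Set.ncard_eq_one.2 ⟨g, injective_allocations_eq_singleton
    (allowed := fun v t => IsUTri T t ∧ t ∈ Set.univ ∧ UInc v.1 t)
    (fun v => cwDist (x v) (y v)) (fun v => ⟨hg v, trivial, (hset v).ge (Or.inl rfl)⟩)
    (fun v w h => hrank v w h.2.2) fun _ t h => hsurj t h.1⟩

end Matching

/-- If `i` and `j` are joined by an arc of the triangulation `T`,
or are neighbours on the boundary (`j = i + 1`), then `n_{ij} = 1`. -/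
theorem matching_number_one_of_arc_or_adjacent (N : ℕ) (hN : 3 ≤ N) [NeZero N]
    (T : Triang N) (i j : Vx N) (h : MemD T i j ∨ j = i + 1) :
    nMatch T i j = 1 := by
  have : Fact (1 < N) := ⟨by omega⟩
  rcases h with h | rfl
  · exact nMatch_eq_one_of_joined (Or.inr (Or.inr h)) h.ne
  · exact nMatch_eq_one_of_joined (Or.inl rfl) (by simp)

end Frieze
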